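/- Let d, m ≥ 1, let I : ℝ^d → ℝ be differentiable with gradient ∇I(x) ≠ 0 for every x ∈ ℝ^d, and let f, g_1, …, g_m : ℝ^d → ℝ^d be vector fields satisfying ∇I(x)ᵀ f(x) = 0 and ∇I(x)ᵀ g_r(x) = 0 for all x ∈ ℝ^d and all r = 1,…,m. Then there exist matrix-valued functions S, T_1, …, T_m : ℝ^d → ℝ^{d×d} such that for every x ∈ ℝ^d the matrices S(x) and T_r(x) are skew-symmetric, S(x)∇I(x) = f(x), and T_r(x)∇I(x) = g_r(x) for all r = 1,…,m (the skew-gradient form of the SDE dX = f(X)dt + Σ_r g_r(X)∘dW_r with conserved quantity I). -/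

import Mathlib

open scoped RealInnerProductSpace
open Matrix

lemma skew_exists {d : ℕ} (v w : EuclideanSpace ℝ (Fin d)) (hv : v ≠ 0) (h : ⟪v, w⟫ = 0) :
    ∃ S : Matrix (Fin d) (Fin d) ℝ, Sᵀ = -S ∧
      (WithLp.equiv 2 (Fin d → ℝ)).symm (S.mulVec (WithLp.equiv 2 (Fin d → ℝ) v)) = w := by
  have hn : ⟪v, v⟫ ≠ 0 := inner_self_ne_zero.mpr hv
  have h1 : ⟪v, v⟫ = ∑ j, v j * v j := by
    rw [PiLp.inner_apply]; rfl
  have h2 : ∑ j, w j * v j = 0 := by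
    rw [← h]; simp [PiLp.inner_apply]
  rw [h1] at hn
  refine ⟨Matrix.of fun i j => (∑ k, v k * v k)⁻¹ * (w i * v j - v i * w j), ?_, ?_⟩
  · ext i j
    simp only [Matrix.transpose_apply, Matrix.of_apply, Matrix.neg_apply]
    ring
  · ext i
    change ∑ j, (∑ k, v k * v k)⁻¹ * (w i * v j - v i * w j) * v j = w i
    have h3 : ∀ j, (∑ k, v k * v k)⁻¹ * (w i * v j - v i * w j) * v j
        = (∑ k, v k * v k)⁻¹ * (w i * (v j * v j) - v i * (w j * v j)) := fun j => by ring
    simp only [h3]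
    rw [← Finset.mul_sum, Finset.sum_sub_distrib, ← Finset.mul_sum, ← Finset.mul_sum, h2]
    rw [mul_zero, sub_zero, mul_left_comm, inv_mul_cancel₀ hn, mul_one]

/-- Skew-gradient form: an SDE `dX = f(X)dt + Σ_r g_r(X)∘dW_r` with conserved quantity `I`
can be written with skew-symmetric matrix functions `S`, `T r` such that
`S x ∇I x = f x` and `T r x ∇I x = g r x`. -/
theorem skew_gradient_form (d m : ℕ) (hd : 1 ≤ d) (hm : 1 ≤ m)
    (I : EuclideanSpace ℝ (Fin d) → ℝ) (hI : Differentiable ℝ I)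
    (hgrad : ∀ x, gradient I x ≠ 0)
    (f : EuclideanSpace ℝ (Fin d) → EuclideanSpace ℝ (Fin d))
    (g : Fin m → EuclideanSpace ℝ (Fin d) → EuclideanSpace ℝ (Fin d))
    (hf : ∀ x, ⟪gradient I x, f x⟫ = 0)
    (hg : ∀ (r : Fin m) (x : EuclideanSpace ℝ (Fin d)), ⟪gradient I x, g r x⟫ = 0) :
    ∃ (S : EuclideanSpace ℝ (Fin d) → Matrix (Fin d) (Fin d) ℝ)
      (T : Fin m → EuclideanSpace ℝ (Fin d) → Matrix (Fin d) (Fin d) ℝ),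
      ∀ x : EuclideanSpace ℝ (Fin d),
        ((S x)ᵀ = -(S x) ∧
          (WithLp.equiv 2 (Fin d → ℝ)).symm
            ((S x).mulVec (WithLp.equiv 2 (Fin d → ℝ) (gradient I x))) = f x) ∧
        ∀ r : Fin m, (T r x)ᵀ = -(T r x) ∧
          (WithLp.equiv 2 (Fin d → ℝ)).symm
            ((T r x).mulVec (WithLp.equiv 2 (Fin d → ℝ) (gradient I x))) = g r x := by
  choose S hS using fun x => skew_exists (gradient I x) (f x) (hgrad x) (hf x)
  choose T hT using fun r x => skew_exists (gradient I x) (g r x) (hgrad x) (hg r x)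
  exact ⟨S, T, fun x => ⟨hS x, fun r => hT r x⟩⟩
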